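/- Let l > 0 satisfy l·tanh(l) ≠ 1. Let u : ℝ² → ℝ be a C² function, 2π-periodic in its first variable x, satisfying ∂²u/∂x² + ∂²u/∂s² + 2·sech²(s)·u = 0 for all (x,s) with −l ≤ s ≤ l, and u(x, l) = u(x, −l) = 0 for all x ∈ ℝ. Then u(x,s) = 0 for all (x,s) with −l ≤ s ≤ l. -/

import Mathlib

open Set

section Slices

variable {F : ℝ × ℝ → ℝ}

lemma hasDerivAt_slice_fst (hF : ContDiff ℝ 1 F) (x s : ℝ) :
    HasDerivAt (fun y => F (y, s)) (fderiv ℝ F (x, s) (1, 0)) x :=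
  ((hF.differentiable one_ne_zero).differentiableAt.hasFDerivAt).comp_hasDerivAt x
    ((hasDerivAt_id x).prodMk (hasDerivAt_const x s))

lemma hasDerivAt_slice_snd (hF : ContDiff ℝ 1 F) (x s : ℝ) :
    HasDerivAt (fun t => F (x, t)) (fderiv ℝ F (x, s) (0, 1)) s :=
  ((hF.differentiable one_ne_zero).differentiableAt.hasFDerivAt).comp_hasDerivAt s
    ((hasDerivAt_const s x).prodMk (hasDerivAt_id s))

lemma contDiff_fderiv_apply_const (hF : ContDiff ℝ 2 F) (v : ℝ × ℝ) :
    ContDiff ℝ 1 (fun p => fderiv ℝ F p v) :=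
  (hF.fderiv_right (by norm_num [one_add_one_eq_two])).clm_apply contDiff_const

lemma iteratedDeriv_two_slice_fst (hF : ContDiff ℝ 2 F) (x s : ℝ) :
    iteratedDeriv 2 (fun y => F (y, s)) x
      = fderiv ℝ (fun p => fderiv ℝ F p (1, 0)) (x, s) (1, 0) := by
  have h : deriv (fun y => F (y, s)) = fun y => fderiv ℝ F (y, s) (1, 0) :=
    funext fun y => (hasDerivAt_slice_fst (hF.of_le one_le_two) y s).deriv
  rw [iteratedDeriv_succ, iteratedDeriv_one, h]
  exact (hasDerivAt_slice_fst (contDiff_fderiv_apply_const hF _) x s).deriv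

lemma iteratedDeriv_two_slice_snd (hF : ContDiff ℝ 2 F) (x s : ℝ) :
    iteratedDeriv 2 (fun t => F (x, t)) s
      = fderiv ℝ (fun p => fderiv ℝ F p (0, 1)) (x, s) (0, 1) := by
  have h : deriv (fun t => F (x, t)) = fun t => fderiv ℝ F (x, t) (0, 1) :=
    funext fun t => (hasDerivAt_slice_snd (hF.of_le one_le_two) x t).deriv
  rw [iteratedDeriv_succ, iteratedDeriv_one, h]
  exact (hasDerivAt_slice_snd (contDiff_fderiv_apply_const hF _) x s).deriv

/-- Differentiation under the integral sign for a `C¹` integrand with a continuous weight. -/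
lemma hasDerivAt_integral_slice_mul (hF : ContDiff ℝ 1 F) {φ : ℝ → ℝ} (hφ : Continuous φ)
    (a b s : ℝ) :
    HasDerivAt (fun t => ∫ x in a..b, F (x, t) * φ x)
      (∫ x in a..b, fderiv ℝ F (x, s) (0, 1) * φ x) s := by
  have hF' : Continuous fun p : ℝ × ℝ => fderiv ℝ F p (0, 1) :=
    (hF.continuous_fderiv one_ne_zero).clm_apply continuous_const
  have hFc := hF.continuous
  obtain ⟨C, hC⟩ := (isCompact_uIcc.prod (isCompact_closedBall s 1)).exists_bound_of_continuousOn
    (f := fun p : ℝ × ℝ => fderiv ℝ F p (0, 1) * φ p.1) (s := uIcc a b ×ˢ Metric.closedBall s 1)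
    (by fun_prop)
  refine (intervalIntegral.hasDerivAt_integral_of_dominated_loc_of_deriv_le
    (F := fun t x => F (x, t) * φ x) (F' := fun t x => fderiv ℝ F (x, t) (0, 1) * φ x)
    (bound := fun _ => C) (Metric.closedBall_mem_nhds s one_pos)
    (Filter.Eventually.of_forall fun t => ?_) ?_ ?_ ?_ intervalIntegrable_const ?_).2
  · exact Continuous.aestronglyMeasurable (by fun_prop)
  · exact Continuous.intervalIntegrable (by fun_prop) _ _
  · exact Continuous.aestronglyMeasurable (by fun_prop)
  · exact Filter.Eventually.of_forall fun x hx t ht => hC (x, t) ⟨uIoc_subset_uIcc hx, ht⟩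
  · exact Filter.Eventually.of_forall fun x _ t _ => (hasDerivAt_slice_snd hF x t).mul_const _

end Slices

/-- Green's identity on a period for a second derivative tested against an eigenfunction. -/
lemma integral_deriv_two_mul_of_periodic {f f' f'' φ φ' : ℝ → ℝ} {k T : ℝ}
    (hf : ∀ x, HasDerivAt f (f' x) x) (hf' : ∀ x, HasDerivAt f' (f'' x) x)
    (hf'' : Continuous f'') (hφ : ∀ x, HasDerivAt φ (φ' x) x)
    (hφ' : ∀ x, HasDerivAt φ' (-k * φ x) x)
    (hfT : Function.Periodic f T) (hφT : φ T = φ 0) (hφT' : φ' T = φ' 0) :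
    ∫ x in (0)..T, f'' x * φ x = -k * ∫ x in (0)..T, f x * φ x := by
  have hfc : Continuous f := continuous_iff_continuousAt.2 fun x => (hf x).continuousAt
  have hφc : Continuous φ := continuous_iff_continuousAt.2 fun x => (hφ x).continuousAt
  have hfT' : f' T = f' 0 := by
    have h := (hf (0 + T)).comp_add_const 0 T
    rw [funext hfT, zero_add] at h
    exact h.unique (hf 0)
  have key : ∫ x in (0)..T, (f'' x * φ x + k * (f x * φ x)) = 0 := by
    rw [intervalIntegral.integral_eq_sub_of_hasDerivAt (f := fun x => f' x * φ x - f x * φ' x)]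
    · have := hfT 0
      rw [zero_add] at this
      simp [hfT', hφT, hφT', this]
    · intro x _
      exact (((hf' x).mul (hφ x)).sub ((hf x).mul (hφ' x))).congr_deriv (by ring)
    · exact Continuous.intervalIntegrable (by fun_prop) _ _
  rw [intervalIntegral.integral_add (Continuous.intervalIntegrable (by fun_prop) _ _)
    (Continuous.intervalIntegrable (by fun_prop) _ _), intervalIntegral.integral_const_mul] at key
  linarith

section ODE

lemma Real.one_sub_tanh_sq (s : ℝ) : 1 - Real.tanh s ^ 2 = (Real.cosh s)⁻¹ ^ 2 := by
  have h := Real.cosh_sq s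
  have hc := (Real.cosh_pos s).ne'
  rw [Real.tanh_eq_sinh_div_cosh]
  field_simp
  linarith

lemma Real.hasDerivAt_tanh (s : ℝ) : HasDerivAt Real.tanh (1 - Real.tanh s ^ 2) s := by
  have hc := (Real.cosh_pos s).ne'
  have h := (Real.hasDerivAt_sinh s).div (Real.hasDerivAt_cosh s) hc
  rw [show Real.tanh = Real.sinh / Real.cosh from funext Real.tanh_eq_sinh_div_cosh]
  exact h.congr_deriv (by simp only [Pi.div_apply]; field_simp)

lemma eq_left_of_hasDerivAt_zero {f : ℝ → ℝ} {a b : ℝ}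
    (hf : ∀ s ∈ Icc a b, HasDerivAt f 0 s) {s : ℝ} (hs : s ∈ Icc a b) : f s = f a :=
  constant_of_has_deriv_right_zero (fun x hx => (hf x hx).continuousAt.continuousWithinAt)
    (fun x hx => (hf x (Ico_subset_Icc_self hx)).hasDerivWithinAt) s hs

lemma eq_zero_of_hasDerivAt_nonneg {f f' : ℝ → ℝ} {a b : ℝ}
    (hf : ∀ s ∈ Icc a b, HasDerivAt f (f' s) s) (hf' : ∀ s ∈ Ioo a b, 0 ≤ f' s)
    (hfa : f a = 0) (hfb : f b = 0) {s : ℝ} (hs : s ∈ Icc a b) : f s = 0 := by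
  have hmono : MonotoneOn f (Icc a b) := by
    refine monotoneOn_of_deriv_nonneg (convex_Icc _ _)
      (fun s hs => (hf s hs).continuousAt.continuousWithinAt)
      (fun s hs => (hf s (interior_subset hs)).differentiableAt.differentiableWithinAt)
      fun s hs => ?_
    rw [(hf s (interior_subset hs)).deriv]
    exact hf' s (by rwa [interior_Icc] at hs)
  have hle : a ≤ b := hs.1.trans hs.2
  exact le_antisymm (hfb ▸ hmono hs (right_mem_Icc.2 hle) hs.2)
    (hfa ▸ hmono (left_mem_Icc.2 hle) hs hs.1)

variable {l : ℝ} {a a' : ℝ → ℝ}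

/-- Modes with `k ≥ 1`: the positive solution `sech` of the case `k = 1` forces uniqueness. -/
lemma jacobi_mode_eq_zero_of_one_le {k : ℝ} (hk : 1 ≤ k)
    (ha : ∀ s ∈ Icc (-l) l, HasDerivAt a (a' s) s)
    (ha' : ∀ s ∈ Icc (-l) l, HasDerivAt a' ((k - 2 * (1 - Real.tanh s ^ 2)) * a s) s)
    (hal : a l = 0) (hal' : a (-l) = 0) {s : ℝ} (hs : s ∈ Icc (-l) l) : a s = 0 := by
  have hq : ∀ s ∈ Icc (-l) l, HasDerivAt (fun s => a s * a' s + a s ^ 2 * Real.tanh s)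
      ((a' s + a s * Real.tanh s) ^ 2 + (k - 1) * a s ^ 2) s := by
    intro s hs
    refine (((ha s hs).mul (ha' s hs)).add
      (((ha s hs).pow 2).mul (Real.hasDerivAt_tanh s))).congr_deriv ?_
    simp only [Pi.pow_apply]
    push_cast
    ring
  have hnonneg : ∀ s, 0 ≤ (a' s + a s * Real.tanh s) ^ 2 + (k - 1) * a s ^ 2 := fun s => by
    have := mul_nonneg (sub_nonneg.2 hk) (sq_nonneg (a s))
    positivity
  have hzero : ∀ s ∈ Icc (-l) l, a s * a' s + a s ^ 2 * Real.tanh s = 0 := fun s hs =>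
    eq_zero_of_hasDerivAt_nonneg hq (fun s _ => hnonneg s) (by simp [hal']) (by simp [hal]) hs
  have hfirst : ∀ s ∈ Ioo (-l) l, a' s + a s * Real.tanh s = 0 := by
    intro s hs
    have h0 : HasDerivAt (fun s => a s * a' s + a s ^ 2 * Real.tanh s) 0 s :=
      (hasDerivAt_const s (0 : ℝ)).congr_of_eventuallyEq <| by
        filter_upwards [Icc_mem_nhds hs.1 hs.2] with t ht using hzero t ht
    have h := (hq s (Ioo_subset_Icc_self hs)).unique h0
    have := mul_nonneg (sub_nonneg.2 hk) (sq_nonneg (a s))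
    nlinarith [sq_nonneg (a' s + a s * Real.tanh s)]
  have hb : ∀ s ∈ Icc (-l) l, HasDerivAt (fun s => a s * Real.cosh s)
      ((a' s + a s * Real.tanh s) * Real.cosh s) s := by
    intro s hs
    refine ((ha s hs).mul (Real.hasDerivAt_cosh s)).congr_deriv ?_
    rw [Real.tanh_eq_sinh_div_cosh]
    have hc := (Real.cosh_pos s).ne'
    field_simp
  have h := eq_zero_of_hasDerivAt_nonneg hb (fun s hs => by simp [hfirst s hs]) (by simp [hal'])
    (by simp [hal]) hs
  exact (mul_eq_zero.1 h).resolve_right (Real.cosh_pos s).ne'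

/-- The radial mode: `tanh s` and `s tanh s - 1` are a fundamental system with Wronskian `1`. -/
lemma jacobi_radial_mode_eq_zero (hl : 0 < l) (hne : l * Real.tanh l ≠ 1)
    (ha : ∀ s ∈ Icc (-l) l, HasDerivAt a (a' s) s)
    (ha' : ∀ s ∈ Icc (-l) l, HasDerivAt a' (-(2 * (1 - Real.tanh s ^ 2)) * a s) s)
    (hal : a l = 0) (hal' : a (-l) = 0) {s : ℝ} (hs : s ∈ Icc (-l) l) : a s = 0 := by
  have hW₁ : ∀ s ∈ Icc (-l) l,
      HasDerivAt (fun s => a' s * Real.tanh s - a s * (1 - Real.tanh s ^ 2)) 0 s := by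
    intro s hs
    have ht := Real.hasDerivAt_tanh s
    refine (((ha' s hs).mul ht).sub ((ha s hs).mul ((ht.pow 2).const_sub 1))).congr_deriv ?_
    simp only [Pi.pow_apply]
    push_cast
    ring
  have hW₂ : ∀ s ∈ Icc (-l) l,
      HasDerivAt (fun s => a' s * (s * Real.tanh s - 1)
        - a s * (Real.tanh s + s * (1 - Real.tanh s ^ 2))) 0 s := by
    intro s hs
    have ht := Real.hasDerivAt_tanh s
    have hi := hasDerivAt_id s
    refine (((ha' s hs).mul ((hi.mul ht).sub_const 1)).sub
      ((ha s hs).mul (ht.add (hi.mul ((ht.pow 2).const_sub 1))))).congr_deriv ?_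
    simp only [Pi.mul_apply, Pi.add_apply, Pi.pow_apply, id]
    push_cast
    ring
  have hr : l ∈ Icc (-l) l := right_mem_Icc.2 (by linarith)
  have h₁ := eq_left_of_hasDerivAt_zero hW₁ hr
  have h₂ := eq_left_of_hasDerivAt_zero hW₂ hr
  have htl : Real.tanh l ≠ 0 := by
    rw [Real.tanh_eq_sinh_div_cosh]
    exact (div_pos (Real.sinh_pos_iff.2 hl) (Real.cosh_pos l)).ne'
  simp only [hal, hal', Real.tanh_neg, zero_mul, sub_zero] at h₁ h₂
  have e₁ : a' l + a' (-l) = 0 := mul_right_cancel₀ htl (by linarith)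
  have e₂ : a' l - a' (-l) = 0 := mul_right_cancel₀ (sub_ne_zero.2 hne) (by linarith)
  have e : a' (-l) = 0 := by linarith
  have g₁ := eq_left_of_hasDerivAt_zero hW₁ hs
  have g₂ := eq_left_of_hasDerivAt_zero hW₂ hs
  simp only [hal', e, zero_mul, sub_zero] at g₁ g₂
  linear_combination (s * Real.tanh s - 1) * g₁ - Real.tanh s * g₂

end ODE

/-- A continuous `2π`-periodic function orthogonal to all `cos (n x)`, `sin (n x)` vanishes. -/
lemma eq_zero_of_forall_integral_cos_sin_eq_zero {f : ℝ → ℝ} (hf : Continuous f)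
    (hper : Function.Periodic f (2 * Real.pi))
    (hcos : ∀ n : ℤ, ∫ x in (0)..(2 * Real.pi), f x * Real.cos (n * x) = 0)
    (hsin : ∀ n : ℤ, ∫ x in (0)..(2 * Real.pi), f x * Real.sin (n * x) = 0) (x : ℝ) :
    f x = 0 := by
  have : Fact (0 < 2 * Real.pi) := ⟨Real.two_pi_pos⟩
  have hper' : Function.Periodic (fun x => (f x : ℂ)) (2 * Real.pi) := fun x => by simp [hper x]
  let g : C(AddCircle (2 * Real.pi), ℂ) :=
    ⟨hper'.lift, continuous_coinduced_dom.2 (Complex.continuous_ofReal.comp hf)⟩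
  have hg : ∀ x : ℝ, g x = f x := fun x => rfl
  have hcoeff : ∀ n : ℤ, fourierCoeff g n = 0 := by
    intro n
    rw [fourierCoeff_eq_intervalIntegral _ _ 0, zero_add]
    have hpt : ∀ x : ℝ, @fourier (2 * Real.pi) (-n) x • g x
        = ((f x * Real.cos (n * x) : ℝ) : ℂ) - ((f x * Real.sin (n * x) : ℝ) : ℂ) * Complex.I := by
      intro x
      rw [fourier_coe_apply, hg, smul_eq_mul,
        show (2 * Real.pi * Complex.I * (-n : ℤ) * x / (2 * Real.pi : ℝ) : ℂ)
          = (-(n * x)) * Complex.I by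
            have : (Real.pi : ℂ) ≠ 0 := by exact_mod_cast Real.pi_ne_zero
            push_cast
            field_simp,
        Complex.exp_mul_I, Complex.cos_neg, Complex.sin_neg]
      push_cast
      ring
    simp_rw [hpt]
    rw [intervalIntegral.integral_sub (Continuous.intervalIntegrable (by fun_prop) _ _)
      (Continuous.intervalIntegrable (by fun_prop) _ _), intervalIntegral.integral_mul_const,
      intervalIntegral.integral_ofReal, intervalIntegral.integral_ofReal, hcos, hsin]
    simp
  have hsum := has_pointwise_sum_fourier_series_of_summable (f := g)
    (by simpa only [funext hcoeff] using summable_zero) (x : AddCircle (2 * Real.pi))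
  simp only [hcoeff, zero_smul] at hsum
  have h := hsum.unique hasSum_zero
  rw [hg] at h
  exact_mod_cast h

/-- Testing the Jacobi equation on the cylinder against an eigenfunction of the circle yields the
corresponding ordinary differential equation. -/
lemma hasDerivAt_jacobi_mode {F : ℝ × ℝ → ℝ} (hF : ContDiff ℝ 2 F) {T : ℝ} {D : Set ℝ}
    (hper : ∀ x s, F (x + T, s) = F (x, s))
    (heq : ∀ x, ∀ s ∈ D, iteratedDeriv 2 (fun y => F (y, s)) x
      + iteratedDeriv 2 (fun t => F (x, t)) s + 2 * (Real.cosh s)⁻¹ ^ 2 * F (x, s) = 0)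
    {k : ℝ} {φ φ' : ℝ → ℝ} (hφ : ∀ x, HasDerivAt φ (φ' x) x)
    (hφ' : ∀ x, HasDerivAt φ' (-k * φ x) x) (hφT : φ T = φ 0) (hφT' : φ' T = φ' 0)
    {s : ℝ} (hs : s ∈ D) :
    HasDerivAt (fun t => ∫ x in (0)..T, fderiv ℝ F (x, t) (0, 1) * φ x)
      ((k - 2 * (1 - Real.tanh s ^ 2)) * ∫ x in (0)..T, F (x, s) * φ x) s := by
  have hφc : Continuous φ := continuous_iff_continuousAt.2 fun x => (hφ x).continuousAt
  have hFc := hF.continuous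
  have hxx : Continuous fun p => fderiv ℝ (fun p => fderiv ℝ F p (1, 0)) p (1, 0) :=
    ((contDiff_fderiv_apply_const hF _).continuous_fderiv one_ne_zero).clm_apply continuous_const
  have hgreen := integral_deriv_two_mul_of_periodic (T := T)
    (fun x => hasDerivAt_slice_fst (hF.of_le one_le_two) x s)
    (fun x => hasDerivAt_slice_fst (contDiff_fderiv_apply_const hF _) x s)
    (hxx.comp (by fun_prop : Continuous fun x : ℝ => (x, s))) hφ hφ' (fun x => hper x s) hφT hφT'
  convert hasDerivAt_integral_slice_mul (contDiff_fderiv_apply_const hF (0, 1)) hφc 0 T s using 1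
  have hpt : ∀ x, fderiv ℝ (fun p => fderiv ℝ F p (0, 1)) (x, s) (0, 1) * φ x
      = -(2 * (1 - Real.tanh s ^ 2)) * (F (x, s) * φ x)
        - fderiv ℝ (fun p => fderiv ℝ F p (1, 0)) (x, s) (1, 0) * φ x := by
    intro x
    have h := heq x s hs
    rw [iteratedDeriv_two_slice_fst hF, iteratedDeriv_two_slice_snd hF,
      ← Real.one_sub_tanh_sq] at h
    linear_combination φ x * h
  simp_rw [hpt]
  rw [intervalIntegral.integral_sub (Continuous.intervalIntegrable (by fun_prop) _ _)
    (Continuous.intervalIntegrable (by fun_prop) _ _), intervalIntegral.integral_const_mul, hgreen]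
  ring

/-- Non-degeneracy of the Jacobi operator on the finite cylinder
`Ω_l = 𝕊¹ × [−l, l]` for `l tanh l ≠ 1`: the Dirichlet kernel of
`Δ + 2 sech²(s)` is trivial. -/
theorem jacobi_dirichlet_nondegeneracy
    (l : ℝ) (hl : 0 < l) (hne : l * Real.tanh l ≠ 1)
    (u : ℝ → ℝ → ℝ)
    (hreg : ContDiff ℝ 2 (fun p : ℝ × ℝ => u p.1 p.2))
    (hper : ∀ x s : ℝ, u (x + 2 * Real.pi) s = u x s)
    (heq : ∀ x s : ℝ, -l ≤ s → s ≤ l →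
      iteratedDeriv 2 (fun x' => u x' s) x
        + iteratedDeriv 2 (fun s' => u x s') s
        + 2 * ((Real.cosh s)⁻¹) ^ 2 * u x s = 0)
    (hbc : ∀ x : ℝ, u x l = 0 ∧ u x (-l) = 0) :
    ∀ x s : ℝ, -l ≤ s → s ≤ l → u x s = 0 := by
  have hmode : ∀ (n : ℤ) (φ φ' : ℝ → ℝ), (∀ x, HasDerivAt φ (φ' x) x) →
      (∀ x, HasDerivAt φ' (-(n : ℝ) ^ 2 * φ x) x) → φ (2 * Real.pi) = φ 0 →
      φ' (2 * Real.pi) = φ' 0 → ∀ s ∈ Icc (-l) l,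
      ∫ x in (0)..(2 * Real.pi), u x s * φ x = 0 := by
    intro n φ φ' hφ hφ' hφT hφT' s hs
    have hφc : Continuous φ := continuous_iff_continuousAt.2 fun x => (hφ x).continuousAt
    have ha := fun s (_ : s ∈ Icc (-l) l) =>
      hasDerivAt_integral_slice_mul (hreg.of_le one_le_two) hφc 0 (2 * Real.pi) s
    have ha' := fun s (hs : s ∈ Icc (-l) l) => hasDerivAt_jacobi_mode hreg (D := Icc (-l) l) hper
      (fun x s hs => heq x s hs.1 hs.2) hφ hφ' hφT hφT' hs
    have hal : ∫ x in (0)..(2 * Real.pi), u x l * φ x = 0 := by simp [hbc]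
    have hal' : ∫ x in (0)..(2 * Real.pi), u x (-l) * φ x = 0 := by simp [hbc]
    rcases eq_or_ne n 0 with rfl | hn
    · exact jacobi_radial_mode_eq_zero hl hne ha
        (fun s hs => by simpa using ha' s hs) hal hal' hs
    · have hk : (1 : ℝ) ≤ (n : ℝ) ^ 2 := by
        exact_mod_cast (one_le_sq_iff_one_le_abs n).2 (Int.one_le_abs hn)
      exact jacobi_mode_eq_zero_of_one_le hk ha ha' hal hal' hs
  intro x s h₁ h₂
  have hlin : ∀ (n : ℤ) (x : ℝ), HasDerivAt (fun x : ℝ => (n : ℝ) * x) n x := fun n x => by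
    simpa using (hasDerivAt_id x).const_mul (n : ℝ)
  have hsin : ∀ n : ℤ, Real.sin (n * (2 * Real.pi)) = 0 := fun n => by
    have h := Real.sin_int_mul_pi (n * 2)
    push_cast at h
    rwa [mul_assoc] at h
  refine eq_zero_of_forall_integral_cos_sin_eq_zero (f := fun x => u x s)
    (hreg.continuous.comp (by fun_prop : Continuous fun x : ℝ => (x, s))) (fun x => hper x s)
    (fun n => hmode n _ (fun x => -(n * Real.sin (n * x))) (fun x => ?_) (fun x => ?_) ?_ ?_ s
      ⟨h₁, h₂⟩)
    (fun n => hmode n _ (fun x => n * Real.cos (n * x)) (fun x => ?_) (fun x => ?_) ?_ ?_ s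
      ⟨h₁, h₂⟩) x
  · exact (hlin n x).cos.congr_deriv (by ring)
  · exact ((hlin n x).sin.const_mul (n : ℝ)).neg.congr_deriv (by ring)
  · simp [Real.cos_int_mul_two_pi]
  · simp [hsin n]
  · exact (hlin n x).sin.congr_deriv (by ring)
  · exact ((hlin n x).cos.const_mul (n : ℝ)).congr_deriv (by ring)
  · simp [hsin n]
  · simp [Real.cos_int_mul_two_pi]
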